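/- arXiv:1210.0481 — 3 statements merged into one kernel-verified Lean document; each statement's English description precedes it below -/
import Mathlib

section
/- If R, S, T are finite binary relations on the natural numbers each of cardinality at most n, then the triangle query result Q = {(a,b,c) : (a,b) ∈ R ∧ (b,c) ∈ S ∧ (a,c) ∈ T} has cardinality at most n^(3/2). -/
/-!
The bound follows from `|Q|² ≤ |R| |S| |T|`. Split `Q` into the fibres `F p` over the pairs
`p = (a, b) ∈ R`; Cauchy–Schwarz gives `|Q|² ≤ |R| ∑ |F p|²`. The sum counts pairs of triples
`(a, b, c), (a, b, c') ∈ Q`, and such a pair is determined by `(b, c) ∈ S` and `(a, c') ∈ T`,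
so the sum is at most `|S| |T|`.
-/

theorem triangle_card_sq_le (R S T : Finset (ℕ × ℕ)) (Q : Finset (ℕ × ℕ × ℕ))
    (hQ : ∀ a b c : ℕ, (a, b, c) ∈ Q ↔ (a, b) ∈ R ∧ (b, c) ∈ S ∧ (a, c) ∈ T) :
    Q.card ^ 2 ≤ R.card * (S.card * T.card) := by
  let F : ℕ × ℕ → Finset (ℕ × ℕ × ℕ) := fun p => Q.filter (fun x => (x.1, x.2.1) = p)
  have hcard : Q.card = ∑ p ∈ R, (F p).card := by
    apply Finset.card_eq_sum_card_fiberwise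
    rintro ⟨a, b, c⟩ hx
    exact ((hQ a b c).1 hx).1
  have hfib : ∑ p ∈ R, (F p).card ^ 2 ≤ S.card * T.card := by
    calc ∑ p ∈ R, (F p).card ^ 2 = (R.sigma fun p => F p ×ˢ F p).card := by
          simp [Finset.card_sigma, sq]
      _ ≤ (S ×ˢ T).card := by
          apply Finset.card_le_card_of_injOn
            (fun z => ((z.2.1.2.1, z.2.1.2.2), (z.2.2.1, z.2.2.2.2)))
          · rintro ⟨⟨a, b⟩, ⟨a₁, b₁, c₁⟩, ⟨a₂, b₂, c₂⟩⟩ h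
            simp only [F, Finset.coe_sigma, Set.mem_sigma_iff, Finset.mem_coe,
              Finset.mem_product, Finset.mem_filter, hQ] at h ⊢
            exact ⟨h.2.1.1.2.1, h.2.2.1.2.2⟩
          · rintro ⟨⟨a, b⟩, ⟨a₁, b₁, c₁⟩, ⟨a₂, b₂, c₂⟩⟩ h
              ⟨⟨a', b'⟩, ⟨a₁', b₁', c₁'⟩, ⟨a₂', b₂', c₂'⟩⟩ h' e
            simp only [F, Finset.coe_sigma, Set.mem_sigma_iff, Finset.mem_coe,
              Finset.mem_product, Finset.mem_filter, Prod.mk.injEq] at h h' e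
            obtain ⟨-, ⟨-, rfl, rfl⟩, -, rfl, rfl⟩ := h
            obtain ⟨-, ⟨-, rfl, rfl⟩, -, rfl, rfl⟩ := h'
            obtain ⟨⟨rfl, rfl⟩, rfl, rfl⟩ := e
            rfl
      _ = S.card * T.card := Finset.card_product S T
  calc Q.card ^ 2 = (∑ p ∈ R, (F p).card) ^ 2 := by rw [hcard]
    _ ≤ R.card * ∑ p ∈ R, (F p).card ^ 2 := sq_sum_le_card_mul_sum_sq
    _ ≤ R.card * (S.card * T.card) := Nat.mul_le_mul_left _ hfib

theorem triangle_query_agm_bound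
    (n : ℕ) (R S T : Finset (ℕ × ℕ))
    (hR : R.card ≤ n) (hS : S.card ≤ n) (hT : T.card ≤ n)
    (Q : Finset (ℕ × ℕ × ℕ))
    (hQ : ∀ a b c : ℕ, (a, b, c) ∈ Q ↔ (a, b) ∈ R ∧ (b, c) ∈ S ∧ (a, c) ∈ T) :
    (Q.card : ℝ) ≤ (n : ℝ) ^ ((3 : ℝ) / 2) := by
  have h : Q.card ^ 2 ≤ n ^ 3 :=
    calc Q.card ^ 2 ≤ R.card * (S.card * T.card) := triangle_card_sq_le R S T Q hQ
      _ ≤ n * (n * n) := by gcongr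
      _ = n ^ 3 := by ring
  refine le_of_pow_le_pow_left₀ two_ne_zero (by positivity) ?_
  rw [← Real.rpow_natCast ((n : ℝ) ^ ((3 : ℝ) / 2)), ← Real.rpow_mul (by positivity)]
  norm_num
  exact_mod_cast h
end

section
/- Let R, S, T be finite binary relations on the natural numbers with |R| ≤ n, |S| ≤ n, |T| ≤ n, and let Q₁ = {(a,b) : (a,b) ∈ R ∧ b ∈ π₁(S) ∧ a ∈ π₁(T)}. Then the sum over all (a,b) ∈ Q₁ of min{|S_b|, |T_a|} is at most n^(3/2), where S_b = {c : (b,c) ∈ S} and T_a = {c : (a,c) ∈ T}. -/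
/-!
By Cauchy–Schwarz and `min x y ^ 2 ≤ x * y`,
`(∑ min |S_b| |T_a|) ^ 2 ≤ |Q₁| * ∑_{(a,b) ∈ Q₁} |S_b| * |T_a|`.
Since `Q₁ ⊆ π₁(T) × π₁(S)`, the last sum is at most
`(∑_{a ∈ π₁(T)} |T_a|) * (∑_{b ∈ π₁(S)} |S_b|) ≤ |T| * |S|`.
Hence the square of the sum is at most `|R| * |S| * |T| ≤ n ^ 3`.
-/

/-- The curried fiber `S_b = {c : (b,c) ∈ S}` of a finite binary relation. -/
def fiber (S : Finset (ℕ × ℕ)) (b : ℕ) : Finset ℕ :=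
  (S.filter (fun q => q.1 = b)).image Prod.snd

lemma sum_card_fiber_le (S : Finset (ℕ × ℕ)) :
    ∑ b ∈ S.image Prod.fst, (fiber S b).card ≤ S.card := by
  rw [Finset.card_eq_sum_card_image Prod.fst S]
  exact Finset.sum_le_sum fun b _ => Finset.card_image_le

theorem summin_bounded_by_agm
    (n : ℕ) (R S T : Finset (ℕ × ℕ))
    (hR : R.card ≤ n) (hS : S.card ≤ n) (hT : T.card ≤ n)
    (Q1 : Finset (ℕ × ℕ))
    (hQ1 : ∀ a b : ℕ, (a, b) ∈ Q1 ↔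
      (a, b) ∈ R ∧ b ∈ S.image Prod.fst ∧ a ∈ T.image Prod.fst) :
    ((∑ p ∈ Q1, min (fiber S p.2).card (fiber T p.1).card : ℕ) : ℝ)
      ≤ (n : ℝ) ^ ((3 : ℝ) / 2) := by
  have hQR : Q1.card ≤ n :=
    (Finset.card_le_card fun p hp => ((hQ1 p.1 p.2).1 hp).1).trans hR
  have hsub : Q1 ⊆ T.image Prod.fst ×ˢ S.image Prod.fst := fun p hp =>
    Finset.mem_product.2 ⟨((hQ1 p.1 p.2).1 hp).2.2, ((hQ1 p.1 p.2).1 hp).2.1⟩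
  have hprod : ∑ p ∈ Q1, (min (fiber S p.2).card (fiber T p.1).card) ^ 2 ≤ n * n :=
    calc ∑ p ∈ Q1, (min (fiber S p.2).card (fiber T p.1).card) ^ 2
        ≤ ∑ p ∈ Q1, (fiber T p.1).card * (fiber S p.2).card :=
          Finset.sum_le_sum fun p _ => by
            rw [sq]
            exact Nat.mul_le_mul (min_le_right _ _) (min_le_left _ _)
      _ ≤ ∑ p ∈ T.image Prod.fst ×ˢ S.image Prod.fst,
            (fiber T p.1).card * (fiber S p.2).card :=
          Finset.sum_le_sum_of_subset hsub
      _ = (∑ a ∈ T.image Prod.fst, (fiber T a).card) *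
            ∑ b ∈ S.image Prod.fst, (fiber S b).card := by
          rw [Finset.sum_mul_sum, Finset.sum_product]
      _ ≤ n * n :=
          Nat.mul_le_mul ((sum_card_fiber_le T).trans hT) ((sum_card_fiber_le S).trans hS)
  have hsq : (∑ p ∈ Q1, min (fiber S p.2).card (fiber T p.1).card) ^ 2 ≤ n ^ 3 :=
    calc (∑ p ∈ Q1, min (fiber S p.2).card (fiber T p.1).card) ^ 2
        ≤ Q1.card * ∑ p ∈ Q1, (min (fiber S p.2).card (fiber T p.1).card) ^ 2 :=
          sq_sum_le_card_mul_sum_sq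
      _ ≤ n * (n * n) := Nat.mul_le_mul hQR hprod
      _ = n ^ 3 := by ring
  refine le_of_pow_le_pow_left₀ two_ne_zero (by positivity) ?_
  rw [← Real.rpow_mul_natCast (Nat.cast_nonneg n)]
  norm_num
  exact_mod_cast hsq
end

section
/- Renumbering realizes the sum-min as a query result size: let R, S, T be finite binary relations on the natural numbers, define S' = {(b,c) : b ∈ π₁(S) ∧ c < |S_b|} and T' = {(a,c) : a ∈ π₁(T) ∧ c < |T_a|}, and let Q' = {(a,b,c) : (a,b) ∈ R ∧ (b,c) ∈ S' ∧ (a,c) ∈ T'}. Then |Q'| equals the sum over all (a,b) with (a,b) ∈ R, b ∈ π₁(S), a ∈ π₁(T) of min{|S_b|, |T_a|}; moreover |S'| = |S| and |T'| = |T|. -/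
theorem card_fiber (S : Finset (ℕ × ℕ)) (b : ℕ) :
    (fiber S b).card = (S.filter (fun q => q.1 = b)).card := by
  unfold fiber
  apply Finset.card_image_of_injOn
  rintro ⟨x, y⟩ hx ⟨z, w⟩ hz h
  simp only [Finset.coe_filter, Set.mem_ofPred_eq] at hx hz h
  rw [hx.2, hz.2, h]

theorem card_renumbered (S S' : Finset (ℕ × ℕ))
    (hS' : ∀ b c : ℕ, (b, c) ∈ S' ↔ b ∈ S.image Prod.fst ∧ c < (fiber S b).card) :
    S'.card = S.card := by
  have h₁ : S.card = ∑ b ∈ S.image Prod.fst, (fiber S b).card := by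
    simp only [card_fiber]
    exact Finset.card_eq_sum_card_image Prod.fst S
  have h₂ : S'.card =
      ((S.image Prod.fst).sigma fun b => Finset.range (fiber S b).card).card := by
    refine Finset.card_bij' (fun q _ => ⟨q.1, q.2⟩) (fun x _ => (x.1, x.2)) ?_ ?_ ?_ ?_
    · rintro ⟨b, c⟩ h
      rw [Finset.mem_sigma, Finset.mem_range]
      exact (hS' b c).1 h
    · rintro ⟨b, c⟩ h
      rw [Finset.mem_sigma, Finset.mem_range] at h
      exact (hS' b c).2 h
    · intros; rfl
    · intros; rfl
  rw [h₂, h₁, Finset.card_sigma]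
  simp only [Finset.card_range]

theorem renumbering_realizes_summin
    (R S T : Finset (ℕ × ℕ))
    (S' T' : Finset (ℕ × ℕ))
    (hS' : ∀ b c : ℕ, (b, c) ∈ S' ↔ b ∈ S.image Prod.fst ∧ c < (fiber S b).card)
    (hT' : ∀ a c : ℕ, (a, c) ∈ T' ↔ a ∈ T.image Prod.fst ∧ c < (fiber T a).card)
    (Q' : Finset (ℕ × ℕ × ℕ))
    (hQ' : ∀ a b c : ℕ, (a, b, c) ∈ Q' ↔ (a, b) ∈ R ∧ (b, c) ∈ S' ∧ (a, c) ∈ T') :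
    Q'.card =
      ∑ p ∈ R.filter (fun p => p.2 ∈ S.image Prod.fst ∧ p.1 ∈ T.image Prod.fst),
        min (fiber S p.2).card (fiber T p.1).card ∧
    S'.card = S.card ∧ T'.card = T.card := by
  refine ⟨?_, card_renumbered S S' hS', card_renumbered T T' hT'⟩
  have h : Q'.card =
      ((R.filter (fun p => p.2 ∈ S.image Prod.fst ∧ p.1 ∈ T.image Prod.fst)).sigma
        fun p => Finset.range (min (fiber S p.2).card (fiber T p.1).card)).card := by
    refine Finset.card_bij' (fun q _ => ⟨(q.1, q.2.1), q.2.2⟩)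
      (fun x _ => (x.1.1, x.1.2, x.2)) ?_ ?_ ?_ ?_
    · rintro ⟨a, b, c⟩ h
      rw [hQ', hS', hT'] at h
      rw [Finset.mem_sigma, Finset.mem_range, Finset.mem_filter, lt_min_iff]
      exact ⟨⟨h.1, h.2.1.1, h.2.2.1⟩, h.2.1.2, h.2.2.2⟩
    · rintro ⟨⟨a, b⟩, c⟩ h
      rw [Finset.mem_sigma, Finset.mem_range, Finset.mem_filter, lt_min_iff] at h
      rw [hQ', hS', hT']
      exact ⟨h.1.1, ⟨h.1.2.1, h.2.1⟩, h.1.2.2, h.2.2⟩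
    · intros; rfl
    · intros; rfl
  rw [h, Finset.card_sigma]
  simp only [Finset.card_range]
end
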